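/- Let h = ⊕_{i=1}^{l} a_i J ⊕ (0) ∈ so(2l+1,ℂ) be the block-diagonal skew-symmetric matrix with 2×2 blocks a_i J, J = [[0,1],[-1,0]], and a final 1×1 zero block. Let X ∈ so(2l+2,ℂ) have h as its top-left (2l+1)×(2l+1) block, last column (z_{11}, z_{12}, ..., z_{l1}, z_{l2}, z_{l+1}, 0)ᵀ and last row its negative transpose. Then the characteristic polynomial of X equals ∑_{i=1}^{l} (z_{i1}² + z_{i2}²) t² ∏_{j≠i}(t² + a_j²) + z_{l+1}² ∏_{i=1}^{l}(t² + a_i²) + t² ∏_{i=1}^{l}(t² + a_i²). -/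

import Mathlib

open Matrix Polynomial

/-- The bordered skew-symmetric matrix `X ∈ so(2l+2,ℂ)` whose top-left
`(2l+1)×(2l+1)` block is `h = ⊕ᵢ aᵢ·J ⊕ (0)` (`J = [[0,1],[-1,0]]`), whose last
column is `(z_{11}, z_{12}, …, z_{l1}, z_{l2}, z_{l+1}, 0)ᵀ` (encoded by
`w : Fin (2l+1) → ℂ`, `w(2i) = z_{i+1,1}`, `w(2i+1) = z_{i+1,2}`,
`w(2l) = z_{l+1}`), and whose last row is the negative transpose. -/
def XD (l : ℕ) (a : Fin l → ℂ) (w : Fin (2 * l + 1) → ℂ) :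
    Matrix (Fin (2 * l + 2)) (Fin (2 * l + 2)) ℂ :=
  Matrix.of fun p q =>
    if h1 : (q : ℕ) = (p : ℕ) + 1 ∧ (p : ℕ) % 2 = 0 ∧ (p : ℕ) < 2 * l then
      a ⟨(p : ℕ) / 2, by omega⟩
    else if h2 : (p : ℕ) = (q : ℕ) + 1 ∧ (q : ℕ) % 2 = 0 ∧ (q : ℕ) < 2 * l then
      -a ⟨(q : ℕ) / 2, by omega⟩
    else if h3 : (q : ℕ) = 2 * l + 1 ∧ (p : ℕ) < 2 * l + 1 then w ⟨(p : ℕ), by omega⟩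
    else if h4 : (p : ℕ) = 2 * l + 1 ∧ (q : ℕ) < 2 * l + 1 then -w ⟨(q : ℕ), by omega⟩
    else 0

/-!
Bordering a matrix `A` by a column `u` and a row `v` with corner `d` gives
`det = d * det A - vᵀ (adj A) u`, so the bordered characteristic polynomial is
`χ_A * (t - d - vᵀ (t - A)⁻¹ u)`. The form `vᵀ (t - A)⁻¹ u` is additive on direct sums, hence only
has to be computed for `v = u` on one block `a J`, where it is `t * (u₁² + u₂²) / (t² + a²)`, and on
the `1 × 1` zero block, where it is `c² / t`. The skew-symmetric border `v = -u` makes all these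
terms enter with a plus sign.
-/

section Determinant

variable {R m n ι : Type*} [CommRing R] [Fintype m] [DecidableEq m] [Fintype n] [DecidableEq n]
  [Fintype ι] [DecidableEq ι]

-- The Schur complement formula with denominators cleared: `Y * S⁻¹` plays the role of `A⁻¹ * B`.
lemma det_fromBlocks_mul_det_of_mul_eq_mul {A : Matrix m m R} {B Y : Matrix m n R}
    {S : Matrix n n R} (h : A * Y = B * S) (L : Matrix n m R) (D : Matrix n n R) :
    (fromBlocks A B L D).det * S.det = A.det * (D * S - L * Y).det := by
  have hmul : fromBlocks A B L D * fromBlocks 1 (-Y) 0 S = fromBlocks A 0 L (D * S - L * Y) := by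
    simp [fromBlocks_multiply, h, sub_eq_neg_add]
  rw [← det_fromBlocks_zero₁₂ A L, ← hmul, det_mul, det_fromBlocks_zero₂₁, det_one, one_mul]

lemma adjugate_eq_of_mul_eq_det_smul_one {A B : Matrix n n R} (hA : IsRegular A.det)
    (h : A * B = A.det • 1) : A.adjugate = B := by
  have hsmul : A.det • A.adjugate = A.det • B := by
    rw [← Matrix.one_mul B, ← smul_mul_assoc, ← adjugate_mul, Matrix.mul_assoc, h, mul_smul_comm,
      Matrix.mul_one]
  ext i j
  exact hA.left (congr_fun₂ hsmul i j)

lemma adjugate_fromBlocks_zero {A : Matrix m m R} {D : Matrix n n R} (hA : IsRegular A.det)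
    (hD : IsRegular D.det) :
    (fromBlocks A 0 0 D).adjugate = fromBlocks (D.det • A.adjugate) 0 0 (A.det • D.adjugate) := by
  refine adjugate_eq_of_mul_eq_det_smul_one ?_ ?_
  · rw [det_fromBlocks_zero₁₂]
    exact hA.mul hD
  · rw [det_fromBlocks_zero₁₂, ← fromBlocks_one, fromBlocks_smul]
    simp [fromBlocks_multiply, mul_adjugate, smul_smul, mul_comm D.det]

lemma adjugate_blockDiagonal {M : ι → Matrix n n R} (hM : ∀ i, IsRegular (M i).det) :
    (blockDiagonal M).adjugate =
      blockDiagonal fun i => (∏ j ∈ Finset.univ.erase i, (M j).det) • (M i).adjugate := by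
  refine adjugate_eq_of_mul_eq_det_smul_one ?_ ?_
  · rw [det_blockDiagonal]
    exact IsRegular.prod fun i _ => hM i
  · rw [← blockDiagonal_mul, det_blockDiagonal, ← blockDiagonal_one, ← blockDiagonal_smul]
    congr 1
    funext i
    rw [mul_smul_comm, mul_adjugate, smul_smul, Finset.prod_erase_mul _ _ (Finset.mem_univ i),
      Pi.smul_apply, Pi.one_apply]

/-- The matrix `A` bordered by a last column `u`, a last row `v` and a corner entry `d`. -/
def border (A : Matrix m m R) (u v : m → R) (d : R) : Matrix (m ⊕ Fin 1) (m ⊕ Fin 1) R :=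
  fromBlocks A (replicateCol (Fin 1) u) (replicateRow (Fin 1) v) !![d]

lemma det_border {A : Matrix m m R} (hA : IsRegular A.det) (u v : m → R) (d : R) :
    (border A u v d).det = d * A.det - v ⬝ᵥ A.adjugate *ᵥ u := by
  have h : A * replicateCol (Fin 1) (A.adjugate *ᵥ u) =
      replicateCol (Fin 1) u * !![A.det] := by
    rw [← replicateCol_mulVec, mulVec_mulVec, mul_adjugate, smul_mulVec, one_mulVec]
    ext
    simp [Matrix.mul_apply, mul_comm]
  have hdet := det_fromBlocks_mul_det_of_mul_eq_mul h (replicateRow (Fin 1) v) !![d]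
  refine hA.right ?_
  simpa [border, det_unique, Matrix.mul_apply, dotProduct, mul_comm A.det] using hdet

end Determinant

section Charpoly

variable {R m n ι : Type*} [CommRing R] [Fintype m] [DecidableEq m] [Fintype n] [DecidableEq n]
  [Fintype ι] [DecidableEq ι]

lemma isRegular_det_charmatrix (A : Matrix n n R) : IsRegular (charmatrix A).det :=
  A.charpoly_monic.isRegular

lemma charmatrix_blockDiagonal (M : ι → Matrix n n R) :
    charmatrix (blockDiagonal M) = blockDiagonal fun i => charmatrix (M i) := by
  ext ⟨k, i⟩ ⟨l, j⟩
  by_cases hij : i = j <;> simp [charmatrix_apply, blockDiagonal_apply, diagonal_apply, hij]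

lemma charmatrix_border (A : Matrix m m R) (u v : m → R) (d : R) :
    charmatrix (border A u v d) =
      border (charmatrix A) (-(C ∘ u)) (-(C ∘ v)) (X - C d) := by
  rw [border, charmatrix_fromBlocks, border]
  congr 1
  ext i j
  simp [Subsingleton.elim i j]

lemma charpoly_blockDiagonal (M : ι → Matrix n n R) :
    (blockDiagonal M).charpoly = ∏ i, (M i).charpoly := by
  rw [charpoly, charmatrix_blockDiagonal, det_blockDiagonal]
  rfl

/-- The polynomial `det(t - A) * vᵀ (t - A)⁻¹ u` in `t`, written with the adjugate so that it makes
sense over every commutative ring. -/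
noncomputable def resolventForm (A : Matrix n n R) (u v : n → R) : R[X] :=
  (C ∘ v) ⬝ᵥ (charmatrix A).adjugate *ᵥ (C ∘ u)

lemma charpoly_border (A : Matrix m m R) (u v : m → R) (d : R) :
    (border A u v d).charpoly = (X - C d) * A.charpoly - resolventForm A u v := by
  rw [charpoly, charmatrix_border, det_border (isRegular_det_charmatrix A), mulVec_neg,
    neg_dotProduct_neg, resolventForm, charpoly]

lemma resolventForm_neg_right (A : Matrix n n R) (u v : n → R) :
    resolventForm A u (-v) = -resolventForm A u v := by
  simp [resolventForm, dotProduct]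

-- The product rule: `resolventForm / charpoly` is additive on direct sums.
lemma resolventForm_fromBlocks_zero (A : Matrix m m R) (D : Matrix n n R) (u v : m ⊕ n → R) :
    resolventForm (fromBlocks A 0 0 D) u v =
      D.charpoly * resolventForm A (u ∘ Sum.inl) (v ∘ Sum.inl) +
        A.charpoly * resolventForm D (u ∘ Sum.inr) (v ∘ Sum.inr) := by
  have hadj := adjugate_fromBlocks_zero (isRegular_det_charmatrix A) (isRegular_det_charmatrix D)
  simp [resolventForm, charmatrix_fromBlocks, hadj, fromBlocks_mulVec, dotProduct_block, charpoly,
    smul_mulVec, Function.comp_assoc]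

lemma resolventForm_blockDiagonal (M : ι → Matrix n n R) (u v : n × ι → R) :
    resolventForm (blockDiagonal M) u v =
      ∑ i, (∏ j ∈ Finset.univ.erase i, (M j).charpoly) *
        resolventForm (M i) (fun k => u (k, i)) (fun k => v (k, i)) := by
  have hadj := adjugate_blockDiagonal fun i => isRegular_det_charmatrix (M i)
  simp only [resolventForm, charmatrix_blockDiagonal, hadj, charpoly]
  simp [dotProduct, mulVec, Fintype.sum_prod_type_right, blockDiagonal_apply, Finset.mul_sum,
    mul_assoc, mul_left_comm]

lemma resolventForm_fin_one (A : Matrix (Fin 1) (Fin 1) R) (u v : Fin 1 → R) :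
    resolventForm A u v = C (v 0 * u 0) := by
  simp [resolventForm, dotProduct]

/-- The skew-symmetric block `a J`, with `J = [[0, 1], [-1, 0]]`. -/
def skewBlock (a : R) : Matrix (Fin 2) (Fin 2) R := !![0, a; -a, 0]

lemma charmatrix_skewBlock (a : R) : charmatrix (skewBlock a) = !![X, -C a; C a, X] := by
  ext i j
  fin_cases i <;> fin_cases j <;> simp [skewBlock]

lemma charpoly_skewBlock (a : R) : (skewBlock a).charpoly = X ^ 2 + C a ^ 2 := by
  rw [charpoly, charmatrix_skewBlock, det_fin_two_of]
  ring

lemma resolventForm_skewBlock_self (a : R) (u : Fin 2 → R) :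
    resolventForm (skewBlock a) u u = C (u 0 ^ 2 + u 1 ^ 2) * X := by
  have hmulVec : !![X, C a; -C a, X] *ᵥ (C ∘ u) =
      ![X * C (u 0) + C a * C (u 1), -C a * C (u 0) + X * C (u 1)] := by
    ext1 k
    fin_cases k <;> simp [mulVec, dotProduct]
  rw [resolventForm, charmatrix_skewBlock, adjugate_fin_two_of, neg_neg, hmulVec, dotProduct,
    Fin.sum_univ_two, C_add, C_pow, C_pow]
  simp only [Function.comp_apply, cons_val_zero, cons_val_one]
  ring

/-- The matrix `⊕ᵢ aᵢ J ⊕ (0)`. -/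
def skewBlockSum (a : ι → R) : Matrix ((Fin 2 × ι) ⊕ Fin 1) ((Fin 2 × ι) ⊕ Fin 1) R :=
  fromBlocks (blockDiagonal fun i => skewBlock (a i)) 0 0 0

lemma charpoly_skewBlockSum (a : ι → R) :
    (skewBlockSum a).charpoly = (∏ i, (X ^ 2 + C (a i) ^ 2)) * X := by
  simp [skewBlockSum, charpoly_blockDiagonal, charpoly_skewBlock]

lemma resolventForm_skewBlockSum_self (a : ι → R) (u : (Fin 2 × ι) ⊕ Fin 1 → R) :
    resolventForm (skewBlockSum a) u u =
      (∑ i, C (u (.inl (0, i)) ^ 2 + u (.inl (1, i)) ^ 2) * X ^ 2 *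
          ∏ j ∈ Finset.univ.erase i, (X ^ 2 + C (a j) ^ 2)) +
        C (u (.inr 0)) ^ 2 * ∏ i, (X ^ 2 + C (a i) ^ 2) := by
  simp only [skewBlockSum, resolventForm_fromBlocks_zero, charpoly_zero, Fintype.card_fin, pow_one,
    resolventForm_blockDiagonal, charpoly_blockDiagonal, charpoly_skewBlock,
    resolventForm_skewBlock_self, resolventForm_fin_one, Function.comp_apply]
  rw [Finset.mul_sum, C_mul, ← sq, mul_comm (∏ i, _)]
  congr 1
  exact Finset.sum_congr rfl fun i _ => by ring

theorem XD_charpoly_general (a : ι → R) (u : (Fin 2 × ι) ⊕ Fin 1 → R) :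
    (border (skewBlockSum a) u (-u) 0).charpoly =
      (∑ i, C (u (.inl (0, i)) ^ 2 + u (.inl (1, i)) ^ 2) * X ^ 2 *
          ∏ j ∈ Finset.univ.erase i, (X ^ 2 + C (a j) ^ 2)) +
        C (u (.inr 0)) ^ 2 * ∏ i, (X ^ 2 + C (a i) ^ 2) +
        X ^ 2 * ∏ i, (X ^ 2 + C (a i) ^ 2) := by
  rw [charpoly_border, resolventForm_neg_right, charpoly_skewBlockSum,
    resolventForm_skewBlockSum_self, C_0]
  ring

end Charpoly

section Reindex

variable {l : ℕ}

/-- Lists the rows of `⊕ᵢ aᵢ J ⊕ (0)` as in `XD`: `l` consecutive pairs, then the zero row. -/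
def skewIndexEquiv (l : ℕ) : (Fin 2 × Fin l) ⊕ Fin 1 ≃ Fin (2 * l + 1) :=
  ((((Equiv.prodComm _ _).trans finProdFinEquiv).sumCongr (Equiv.refl _)).trans
    finSumFinEquiv).trans (finCongr (by rw [mul_comm]))

lemma skewIndexEquiv_inl (k : Fin 2) (i : Fin l) :
    skewIndexEquiv l (.inl (k, i)) = ⟨2 * i + k, by omega⟩ := by
  ext
  simp [skewIndexEquiv, add_comm]

lemma skewIndexEquiv_inr (k : Fin 1) : skewIndexEquiv l (.inr k) = Fin.last (2 * l) := by
  ext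
  simp [skewIndexEquiv, mul_comm]

variable (a : Fin l → ℂ) (w : Fin (2 * l + 1) → ℂ)

lemma XD_castSucc_last (p : Fin (2 * l + 1)) : XD l a w p.castSucc (Fin.last _) = w p := by
  have hp := p.isLt
  simp only [XD, of_apply, Fin.val_castSucc, Fin.val_last, true_and]
  rw [dif_neg (by omega), dif_neg (by omega), dif_pos hp]

lemma XD_last_castSucc (q : Fin (2 * l + 1)) : XD l a w (Fin.last _) q.castSucc = -w q := by
  have hq := q.isLt
  simp only [XD, of_apply, Fin.val_castSucc, Fin.val_last, true_and]
  rw [dif_neg (by omega), dif_neg (by omega), dif_neg (by omega), dif_pos hq]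

lemma XD_last_last : XD l a w (Fin.last _) (Fin.last _) = 0 := by
  simp [XD]

lemma XD_castSucc_inl_self (i : Fin l) (k m : Fin 2) :
    XD l a w (skewIndexEquiv l (.inl (k, i))).castSucc (skewIndexEquiv l (.inl (m, i))).castSucc =
      skewBlock (a i) k m := by
  have hborder : 2 * (i : ℕ) ≠ 2 * l + 1 := by omega
  fin_cases k <;> fin_cases m <;> simp [XD, skewIndexEquiv_inl, skewBlock, hborder, i.isLt.ne]

lemma XD_castSucc_castSucc (p q : (Fin 2 × Fin l) ⊕ Fin 1) :
    XD l a w (skewIndexEquiv l p).castSucc (skewIndexEquiv l q).castSucc = skewBlockSum a p q := by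
  rcases p with ⟨k, i⟩ | k <;> rcases q with ⟨m, j⟩ | m
  · rw [skewBlockSum, fromBlocks_apply₁₁]
    obtain rfl | hij := eq_or_ne i j
    · rw [XD_castSucc_inl_self, blockDiagonal_apply_eq]
    · have hval : (i : ℕ) ≠ j := Fin.val_ne_of_ne hij
      simp only [XD, of_apply, skewIndexEquiv_inl, Fin.val_castSucc]
      rw [dif_neg (by omega), dif_neg (by omega), dif_neg (by omega), dif_neg (by omega),
        blockDiagonal_apply_ne _ _ _ hij]
  all_goals
    simp only [XD, of_apply, skewIndexEquiv_inl, skewIndexEquiv_inr, Fin.val_castSucc, Fin.val_last]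
    rw [dif_neg (by omega), dif_neg (by omega), dif_neg (by omega), dif_neg (by omega)]
    rfl

/-- The order of the rows of `XD`: those of `⊕ᵢ aᵢ J ⊕ (0)`, then the border. -/
def borderIndexEquiv (l : ℕ) : ((Fin 2 × Fin l) ⊕ Fin 1) ⊕ Fin 1 ≃ Fin (2 * l + 2) :=
  ((skewIndexEquiv l).sumCongr (Equiv.refl _)).trans finSumFinEquiv

lemma XD_eq_reindex_border :
    XD l a w = reindex (borderIndexEquiv l) (borderIndexEquiv l)
      (border (skewBlockSum a) (w ∘ skewIndexEquiv l) (-(w ∘ skewIndexEquiv l)) 0) := by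
  rw [← (reindex _ _).symm_apply_eq]
  ext (p | p) (q | q)
  · exact XD_castSucc_castSucc a w p q
  · rw [Subsingleton.elim q 0]
    exact XD_castSucc_last a w _
  · rw [Subsingleton.elim p 0]
    exact XD_last_castSucc a w _
  · rw [Subsingleton.elim p 0, Subsingleton.elim q 0]
    exact XD_last_last a w

end Reindex

/-- The characteristic polynomial of the bordered matrix `X ∈ so(2l+2,ℂ)` is
`∑ᵢ (z_{i1}² + z_{i2}²) t² ∏_{j≠i}(t² + a_j²) + z_{l+1}² ∏ᵢ(t² + a_i²)
  + t² ∏ᵢ(t² + a_i²)`. -/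
theorem XD_charpoly (l : ℕ) (a : Fin l → ℂ) (w : Fin (2 * l + 1) → ℂ) :
    (XD l a w).charpoly =
      (∑ i : Fin l,
        C (w ⟨2 * (i : ℕ), by have := i.isLt; omega⟩ ^ 2 +
            w ⟨2 * (i : ℕ) + 1, by have := i.isLt; omega⟩ ^ 2) * X ^ 2 *
          ∏ j ∈ Finset.univ.erase i, (X ^ 2 + C (a j) ^ 2)) +
        C (w ⟨2 * l, by omega⟩) ^ 2 * ∏ i : Fin l, (X ^ 2 + C (a i) ^ 2) +
        X ^ 2 * ∏ i : Fin l, (X ^ 2 + C (a i) ^ 2) := by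
  rw [XD_eq_reindex_border, charpoly_reindex, XD_charpoly_general]
  simp [skewIndexEquiv_inl, skewIndexEquiv_inr, Fin.last]
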